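/- Let p, q ∈ R be idempotents such that p - q is group invertible. Then f*p = p*g = p*h = h*p, and q*h*q = q*h = h*q = h*q*h. -/

import Mathlib

/-!
For idempotents `p` and `q` the difference `a = p - q` interchanges `p` and `1 - q`:
`a * p = (1 - q) * a` and `a * (1 - q) = p * a`. Anything interchanged by `a` commutes with the
idempotent `a^# * a = h` and is interchanged by `a^#` as well. So `p`, and with it `q = p - a`,
commutes with `h`, while `p * a^# * q = a^# * (1 - q) * q = 0` turns `p * h = p * a^# * (p - q)`
into `p * a^# * p`.
-/

variable {R : Type*} [Ring R]

/-- `c` is a group inverse of `a`. -/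
def IsGroupInvOf (a c : R) : Prop := a * c * a = a ∧ c * a * c = c ∧ a * c = c * a

/-- `a` is group invertible. -/
def GroupInvertible (a : R) : Prop := ∃ c, IsGroupInvOf a c

/-- The group inverse `a^#` (junk value `0` if it does not exist). -/
noncomputable def gi (a : R) : R :=
  haveI := Classical.dec (GroupInvertible a)
  if h : GroupInvertible a then h.choose else 0

/-- The spectral idempotent `a^π = 1 - a * a^#`. -/
noncomputable def sp (a : R) : R := 1 - a * gi a

theorem GroupInvertible.isGroupInvOf_gi {a : R} (ha : GroupInvertible a) :
    IsGroupInvOf a (gi a) := by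
  rw [gi, dif_pos ha]
  exact ha.choose_spec

namespace IsGroupInvOf

variable {a c x y : R}

theorem commute (h : IsGroupInvOf a c) : Commute a c := h.2.2

theorem isIdempotentElem_mul (h : IsGroupInvOf a c) : IsIdempotentElem (c * a) := by
  rw [IsIdempotentElem, ← mul_assoc, h.2.1]

theorem commute_mul_of_semiconjBy (h : IsGroupInvOf a c) (hxy : SemiconjBy a x y)
    (hyx : SemiconjBy a y x) : Commute (c * a) x := by
  have compress_left : c * a * x * (c * a) = c * a * x :=
    calc c * a * x * (c * a) = c * (a * x) * (c * a) := by rw [mul_assoc c a x]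
      _ = c * y * (a * c * a) := by rw [hxy.eq]; simp only [mul_assoc]
      _ = c * a * x := by rw [h.1, mul_assoc, ← hxy.eq, mul_assoc]
  have compress_right : a * c * x * (a * c) = x * (a * c) :=
    calc a * c * x * (a * c) = a * c * (x * a) * c := by simp only [mul_assoc]
      _ = a * c * a * y * c := by rw [← hyx.eq, ← mul_assoc]
      _ = x * (a * c) := by rw [h.1, hyx.eq, mul_assoc]
  rw [h.commute.eq] at compress_right
  exact compress_left.symm.trans compress_right

theorem semiconjBy (h : IsGroupInvOf a c) (hxy : SemiconjBy a x y) (hyx : SemiconjBy a y x) :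
    SemiconjBy c x y :=
  calc c * x = c * a * c * x := by rw [h.2.1]
    _ = c * (c * a * x) := by rw [mul_assoc c a c, h.commute.eq, mul_assoc]
    _ = c * (x * (a * c)) := by rw [(h.commute_mul_of_semiconjBy hxy hyx).eq, h.commute.eq]
    _ = c * a * y * c := by rw [← mul_assoc x, ← hyx.eq]; simp only [mul_assoc]
    _ = y * (c * a * c) := by rw [(h.commute_mul_of_semiconjBy hyx hxy).eq, mul_assoc]
    _ = y * c := by rw [h.2.1]

end IsGroupInvOf

section Idempotents

variable {p q c : R}

theorem semiconjBy_sub_left (hp : IsIdempotentElem p) (hq : IsIdempotentElem q) :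
    SemiconjBy (p - q) p (1 - q) := by
  simp only [SemiconjBy, sub_mul, mul_sub, one_mul, hp.eq, hq.eq, sub_self, sub_zero]

theorem semiconjBy_sub_one_sub_right (hp : IsIdempotentElem p) (hq : IsIdempotentElem q) :
    SemiconjBy (p - q) (1 - q) p := by
  simpa only [sub_sub_sub_cancel_left, sub_sub_cancel] using
    semiconjBy_sub_left hq.one_sub hp.one_sub

theorem commute_groupInv_sub_mul_left (hp : IsIdempotentElem p) (hq : IsIdempotentElem q)
    (hc : IsGroupInvOf (p - q) c) : Commute (c * (p - q)) p :=
  hc.commute_mul_of_semiconjBy (semiconjBy_sub_left hp hq) (semiconjBy_sub_one_sub_right hp hq)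

theorem commute_groupInv_sub_mul_right (hp : IsIdempotentElem p) (hq : IsIdempotentElem q)
    (hc : IsGroupInvOf (p - q) c) : Commute (c * (p - q)) q := by
  have comm_sub : Commute (c * (p - q)) (p - q) := hc.commute.symm.mul_left (Commute.refl _)
  simpa only [sub_sub_cancel] using
    (commute_groupInv_sub_mul_left hp hq hc).sub_right comm_sub

theorem mul_groupInv_sub_mul_eq_zero (hp : IsIdempotentElem p) (hq : IsIdempotentElem q)
    (hc : IsGroupInvOf (p - q) c) : p * c * q = 0 := by
  have swap : SemiconjBy c (1 - q) p :=
    hc.semiconjBy (semiconjBy_sub_one_sub_right hp hq) (semiconjBy_sub_left hp hq)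
  rw [← swap.eq, mul_assoc, hq.one_sub_mul_self, mul_zero]

end Idempotents

theorem fgh_relations (p q f g h : R) (hp : p * p = p) (hq : q * q = q)
    (hpq : GroupInvertible (p - q))
    (hf : f = p * gi (p - q)) (hg : g = gi (p - q) * p)
    (hh : h = gi (p - q) * (p - q)) :
    f * p = p * g ∧ p * g = p * h ∧ p * h = h * p ∧
      q * h * q = q * h ∧ q * h = h * q ∧ h * q = h * q * h := by
  have inv := hpq.isGroupInvOf_gi
  have idem_h : IsIdempotentElem h := hh ▸ inv.isIdempotentElem_mul
  have comm_p : Commute h p := hh ▸ commute_groupInv_sub_mul_left hp hq inv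
  have comm_q : Commute h q := hh ▸ commute_groupInv_sub_mul_right hp hq inv
  have fp_eq_pg : f * p = p * g := by rw [hf, hg, mul_assoc]
  have pg_eq_ph : p * g = p * h := by
    rw [hg, hh, mul_sub, mul_sub, ← mul_assoc p _ q, mul_groupInv_sub_mul_eq_zero hp hq inv,
      sub_zero]
  have qhq_eq_qh : q * h * q = q * h := by rw [mul_assoc, comm_q.eq, ← mul_assoc, hq]
  have hq_eq_hqh : h * q = h * q * h := by rw [comm_q.eq, mul_assoc, idem_h.eq]
  exact ⟨fp_eq_pg, pg_eq_ph, comm_p.symm, qhq_eq_qh, comm_q.symm, hq_eq_hqh⟩
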